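/- arXiv:2402.17849 — 2 statements merged into one kernel-verified Lean document; each statement's English description precedes it below -/
import Mathlib

section
/- For every integer n ≥ 1, the total number of peaks in all Dyck paths of length 2n equals the binomial coefficient C(2n−1, n). -/
/-- The step associated to a letter: `true` is an up step `+1`, `false` a down step `-1`. -/
def stepVal (b : Bool) : ℤ := if b then 1 else -1

/-- Partial sum `S_i`: the sum of the first `i` steps of the word `w`. -/
def psum {L : ℕ} (w : Fin L → Bool) (i : ℕ) : ℤ :=
  ∑ j : Fin L, if (j : ℕ) < i then stepVal (w j) else 0

/-- A Dyck bridge: a `±1` word whose total sum is `0`. -/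
def IsBridge {L : ℕ} (w : Fin L → Bool) : Prop := psum w L = 0

/-- A Dyck path: a bridge all of whose partial sums are nonnegative. -/
def IsDyck {L : ℕ} (w : Fin L → Bool) : Prop :=
  IsBridge w ∧ ∀ i : ℕ, 0 ≤ psum w i

/-- A peak at (0-based) position `i`: step `i` is up and step `i+1` is down. -/
def IsPeak {L : ℕ} (w : Fin L → Bool) (i : ℕ) : Prop :=
  ∃ j k : Fin L, (j : ℕ) = i ∧ (k : ℕ) = i + 1 ∧ w j = true ∧ w k = false

/-- The height of the peak at (0-based) position `i`, i.e. the altitude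
reached by its up step. -/
def peakHeight {L : ℕ} (w : Fin L → Bool) (i : ℕ) : ℤ := psum w (i + 1)

/-- A crossing of the x-axis at (1-based) index `i`: `0 < i < L`, `S_i = 0`,
and the steps `w_i`, `w_{i+1}` (1-based) are equal. -/
def IsCrossing {L : ℕ} (w : Fin L → Bool) (i : ℕ) : Prop :=
  0 < i ∧ i < L ∧ psum w i = 0 ∧
    ∃ j k : Fin L, (j : ℕ) + 1 = i ∧ (k : ℕ) = i ∧ w j = w k

def toStep (b : Bool) : DyckStep := if b then DyckStep.U else DyckStep.D
def ofStep (s : DyckStep) : Bool := match s with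
  | DyckStep.U => true
  | DyckStep.D => false

lemma ofStep_toStep (b : Bool) : ofStep (toStep b) = b := by cases b <;> rfl
lemma toStep_ofStep (b : DyckStep) : toStep (ofStep b) = b := by cases b <;> rfl

def good : ℤ → List DyckStep → Prop
  | h, [] => h = 0
  | h, (s :: l) => 0 ≤ h ∧ good (h + stepVal (ofStep s)) l

lemma good_nonneg {h : ℤ} {l : List DyckStep} (hg : good h l) : 0 ≤ h := by
  cases l with
  | nil => simp only [good] at hg; omega
  | cons a l => exact hg.1

lemma good_insert (a b : List DyckStep) (h : ℤ) :
    good h (a ++ DyckStep.U :: DyckStep.D :: b) ↔ good h (a ++ b) := by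
  induction a generalizing h with
  | nil =>
    have e1 : stepVal (ofStep DyckStep.U) = 1 := rfl
    have e2 : stepVal (ofStep DyckStep.D) = -1 := rfl
    simp only [List.nil_append, good, e1, e2, add_neg_cancel_right]
    constructor
    · rintro ⟨_, _, h3⟩; exact h3
    · intro h3
      have := good_nonneg h3
      exact ⟨this, by omega, h3⟩
  | cons s a ih => simp only [List.cons_append, good, ih]

lemma psum_zero' {L : ℕ} (w : Fin L → Bool) : psum w 0 = 0 := by simp [psum]

lemma psum_succ' {L : ℕ} (w : Fin (L+1) → Bool) (i : ℕ) :
    psum w (i+1) = stepVal (w 0) + psum (fun j => w j.succ) i := by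
  simp [psum, Fin.sum_univ_succ]

lemma good_ofFn {L : ℕ} (w : Fin L → Bool) (h : ℤ) :
    (h + psum w L = 0 ∧ ∀ i : ℕ, 0 ≤ h + psum w i) ↔ good h (List.ofFn (fun j => toStep (w j))) := by
  induction L generalizing h with
  | zero => 
    simp only [psum, Finset.univ_eq_empty, Finset.sum_empty, List.ofFn_zero, good]
    constructor
    · rintro ⟨h1, _⟩; omega
    · intro h1; refine ⟨by omega, fun _ => by omega⟩
  | succ L ih =>
    rw [List.ofFn_succ]
    simp only [good, ofStep_toStep]
    rw [← ih, psum_succ']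
    constructor
    · rintro ⟨h1, h2⟩
      refine ⟨by simpa [psum_zero'] using h2 0, by omega, fun i => ?_⟩
      have := h2 (i+1)
      rw [psum_succ'] at this; omega
    · rintro ⟨h0, h1, h2⟩
      refine ⟨by omega, fun i => ?_⟩
      cases i with
      | zero => rw [psum_zero']; omega
      | succ i => rw [psum_succ']; have := h2 i; omega

lemma isDyck_iff {L : ℕ} (w : Fin L → Bool) :
    IsDyck w ↔ good 0 (List.ofFn (fun j => toStep (w j))) := by
  rw [← good_ofFn]; simp [IsDyck, IsBridge]

lemma good_count (l : List DyckStep) (h : ℤ) :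
    good h l ↔ (h + l.count DyckStep.U = l.count DyckStep.D ∧
      ∀ i, ((l.take i).count DyckStep.D : ℤ) ≤ h + (l.take i).count DyckStep.U) := by
  induction l generalizing h with
  | nil => simp [good]; omega
  | cons s l ih =>
    simp only [good, ih]
    have key : ∀ t : List DyckStep, (((s :: t).count DyckStep.U : ℕ) : ℤ) - (s :: t).count DyckStep.D
        = stepVal (ofStep s) + t.count DyckStep.U - t.count DyckStep.D := by
      intro t
      cases s <;> simp [List.count_cons, ofStep, stepVal] <;> ring
    have k0 := key l
    constructor
    · rintro ⟨h0, h1, h2⟩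
      refine ⟨by omega, fun i => ?_⟩
      cases i with
      | zero => simpa using h0
      | succ i =>
        have := h2 i
        have := key (l.take i)
        rw [List.take_succ_cons]; omega
    · rintro ⟨h1, h2⟩
      refine ⟨by simpa using h2 0, by omega, fun i => ?_⟩
      have := h2 (i+1)
      have := key (l.take i)
      rw [List.take_succ_cons] at *; omega

def goodEquiv (m : ℕ) : {l : List DyckStep // l.length = 2 * m ∧ good 0 l} ≃
    {p : DyckWord // p.semilength = m} where
  toFun l := ⟨⟨l.1, by
      have := ((good_count _ _).1 l.2.2).1; omega, fun i => by
      have := ((good_count _ _).1 l.2.2).2 i; omega⟩, by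
      have h := DyckWord.two_mul_semilength_eq_length (p := ⟨l.1, by
        have := ((good_count _ _).1 l.2.2).1; omega, fun i => by
        have := ((good_count _ _).1 l.2.2).2 i; omega⟩)
      have := l.2.1
      simp only at h
      omega⟩
  invFun p := ⟨p.1.toList, by
      have := p.1.two_mul_semilength_eq_length
      have := p.2; omega, by
      rw [good_count]
      refine ⟨by have := p.1.count_U_eq_count_D; omega, fun i => ?_⟩
      have := p.1.count_D_le_count_U i; omega⟩
  left_inv _ := rfl
  right_inv _ := rfl

lemma card_good (m : ℕ) : Nat.card {l : List DyckStep // l.length = 2 * m ∧ good 0 l} = catalan m := by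
  rw [Nat.card_congr (goodEquiv m), Nat.card_eq_fintype_card,
    DyckWord.card_dyckWord_semilength_eq_catalan]

lemma decomp (l : List DyckStep) (i : ℕ) (h : i + 1 < l.length) (h1 : l[i] = DyckStep.U)
    (h2 : l[i+1] = DyckStep.D) :
    l = l.take i ++ DyckStep.U :: DyckStep.D :: l.drop (i+2) := by
  conv_lhs => rw [← List.take_append_drop i l, List.drop_eq_getElem_cons (by omega),
    List.drop_eq_getElem_cons (by omega), h1, h2]

lemma peak_decomp {L : ℕ} (w : Fin L → Bool) (i : ℕ) (hp : IsPeak w i) :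
    i + 1 < L ∧ List.ofFn (fun j => toStep (w j)) = (List.ofFn (fun j => toStep (w j))).take i ++
      DyckStep.U :: DyckStep.D :: (List.ofFn (fun j => toStep (w j))).drop (i+2) := by
  obtain ⟨j, k, hj, hk, h1, h2⟩ := hp
  have := k.2
  refine ⟨by omega, decomp _ _ (by simp; omega) ?_ ?_⟩
  · subst hj
    simp [h1, toStep]
  · simp only [← hk]
    simp [h2, toStep]

lemma card_peaks (m : ℕ) :
    Nat.card {p : (Fin (2 * (m+1)) → Bool) × ℕ // IsDyck p.1 ∧ IsPeak p.1 p.2} =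
      catalan m * (2 * m + 1) := by
  rw [← card_good]
  conv_rhs => rw [← Nat.card_fin (2 * m + 1), ← Nat.card_prod]
  let F : {p : (Fin (2 * (m+1)) → Bool) × ℕ // IsDyck p.1 ∧ IsPeak p.1 p.2} →
      {l : List DyckStep // l.length = 2 * m ∧ good 0 l} × Fin (2 * m + 1) := fun p =>
    (⟨(List.ofFn (fun j => toStep (p.1.1 j))).take p.1.2 ++
        (List.ofFn (fun j => toStep (p.1.1 j))).drop (p.1.2+2), by
        obtain ⟨h, -⟩ := peak_decomp _ _ p.2.2
        simp; omega, by
        obtain ⟨-, h⟩ := peak_decomp _ _ p.2.2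
        rw [← good_insert, ← h, ← isDyck_iff]
        exact p.2.1⟩,
      ⟨p.1.2, by obtain ⟨h, -⟩ := peak_decomp _ _ p.2.2; omega⟩)
  apply Nat.card_eq_of_bijective F
  constructor
  · rintro ⟨⟨w, i⟩, hw, hi⟩ ⟨⟨w', i'⟩, hw', hi'⟩ h
    simp only [F, Prod.mk.injEq, Subtype.mk.injEq, Fin.mk.injEq] at h
    obtain ⟨h, rfl⟩ := h
    obtain ⟨hl, hd⟩ := peak_decomp _ _ hi
    obtain ⟨hl', hd'⟩ := peak_decomp _ _ hi'
    simp only at hl hd hl' hd'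
    obtain ⟨e1, e2⟩ := List.append_inj h (by simp)
    rw [e1, e2, ← hd'] at hd
    have := List.ofFn_injective hd
    have : w = w' := by
      funext j
      have := congrFun this j
      simpa [ofStep_toStep] using congrArg ofStep this
    subst this
    rfl
  · rintro ⟨⟨l, hl, hg⟩, ⟨i, hi⟩⟩
    let l' := l.take i ++ DyckStep.U :: DyckStep.D :: l.drop i
    have hl' : l'.length = 2 * (m+1) := by simp [l']; omega
    let w : Fin (2 * (m+1)) → Bool := fun j => ofStep (l'[(j:ℕ)]'(by omega))
    have hw : List.ofFn (fun j => toStep (w j)) = l' := by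
      apply List.ext_getElem
      · rw [List.length_ofFn, hl']
      · intro k h1 h2
        rw [List.getElem_ofFn]
        simp only [w, toStep_ofStep]
    refine ⟨⟨⟨w, i⟩, ?_, ?_⟩, ?_⟩
    · simp only
      rw [isDyck_iff, hw, good_insert, List.take_append_drop]
      exact hg
    · refine ⟨⟨i, by omega⟩, ⟨i+1, by omega⟩, rfl, rfl, ?_, ?_⟩
      · have : l'[i]'(by omega) = DyckStep.U := by
          simp [l', List.getElem_append, hl, show i ≤ 2 * m by omega]
        simp [w, this, ofStep]
      · have : l'[i+1]'(by omega) = DyckStep.D := by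
          simp [l', List.getElem_append, hl, show i ≤ 2 * m by omega]
        simp [w, this, ofStep]
    · have hlen : (l.take i).length = i := by simp; omega
      simp only [F, Prod.mk.injEq, Subtype.mk.injEq, and_true]
      rw [hw]
      have e1 : l'.take i = l.take i := List.take_left' hlen
      have e2 : l'.drop (i+2) = l.drop i := by
        rw [← List.drop_drop, List.drop_left' hlen]; rfl
      rw [e1, e2, List.take_append_drop]

/-- For every integer `n ≥ 1`, the total number of peaks in all
Dyck paths of length `2n` (i.e. the number of pairs `(P, i)` with `P` a Dyck
path of length `2n` and `i` a peak of `P`) equals `C(2n - 1, n)`. -/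
theorem stmt_4 (n : ℕ) (hn : 1 ≤ n) :
    Nat.card {p : (Fin (2 * n) → Bool) × ℕ // IsDyck p.1 ∧ IsPeak p.1 p.2} =
      Nat.choose (2 * n - 1) n := by
  obtain ⟨m, rfl⟩ : ∃ m, n = m + 1 := ⟨n - 1, by omega⟩
  rw [card_peaks, show 2 * (m+1) - 1 = 2 * m + 1 by omega]
  have h1 := succ_mul_catalan_eq_centralBinom m
  have h2 := Nat.add_one_mul_choose_eq (2 * m) m
  rw [Nat.centralBinom] at h1
  rw [← h1] at h2
  apply Nat.eq_of_mul_eq_mul_right (Nat.succ_pos m)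
  rw [Nat.succ_eq_add_one, ← h2]; ring
end

section
/- For every integer n ≥ 1, the number of Dyck bridges of semi-length n whose summits are non-decreasing (i.e., reading the summits from left to right, their heights form a weakly increasing sequence) equals the Fibonacci number F_{2n+1}. -/
/-- A summit of a word of length `L`: an index `i` with `0 ≤ i ≤ L` whose
altitude is strictly higher than that of its direct neighbors.  An internal
index `0 < i < L` is a summit iff the `i`-th step (1-based) is up and the
`(i+1)`-st is down; `i = 0` is a summit iff the first step is down; `i = L`
is a summit iff the last step is up. -/
def IsSummit {L : ℕ} (w : Fin L → Bool) (i : ℕ) : Prop :=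
  (i = 0 ∧ ∃ j : Fin L, (j : ℕ) = 0 ∧ w j = false) ∨
  (0 < i ∧ i < L ∧
    ∃ j k : Fin L, (j : ℕ) + 1 = i ∧ (k : ℕ) = i ∧ w j = true ∧ w k = false) ∨
  (i = L ∧ ∃ j : Fin L, (j : ℕ) + 1 = L ∧ w j = true)

def okw : Bool → ℕ → List Bool → Prop
  | dir, k, [] => dir = false ∨ k = 0
  | _, k, true :: l => okw true (k - 1) l
  | true, k, false :: l => k = 0 ∧ okw false 1 l
  | false, k, false :: l => okw false (k + 1) l

noncomputable def cnt (L : ℕ) (P : List Bool → Prop) : ℕ :=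
  Nat.card {w : Fin L → Bool // P (List.ofFn w)}

lemma cnt_zero_true (P : List Bool → Prop) (h : P []) : cnt 0 P = 1 := by
  unfold cnt
  rw [Nat.card_eq_one_iff_unique]
  refine ⟨⟨fun a b => Subtype.ext (Subsingleton.elim _ _)⟩, ⟨⟨Fin.elim0, by simpa using h⟩⟩⟩

lemma cnt_false (L : ℕ) (P : List Bool → Prop) (h : ∀ l, l.length = L → ¬ P l) : cnt L P = 0 := by
  unfold cnt
  rw [Nat.card_eq_zero]
  left
  exact ⟨fun a => h _ (by simp) a.2⟩

lemma cnt_congr (L : ℕ) (P Q : List Bool → Prop) (h : ∀ l, l.length = L → (P l ↔ Q l)) :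
    cnt L P = cnt L Q := by
  unfold cnt
  exact Nat.card_congr (Equiv.subtypeEquivRight fun w => h _ (by simp))

lemma cnt_succ (L : ℕ) (P : List Bool → Prop) :
    cnt (L + 1) P = cnt L (fun l => P (true :: l)) + cnt L (fun l => P (false :: l)) := by
  unfold cnt
  rw [← Nat.card_sum]
  refine Nat.card_congr ⟨fun w => if h : w.1 0 = true then
      Sum.inl ⟨Fin.tail w.1, ?_⟩ else Sum.inr ⟨Fin.tail w.1, ?_⟩,
    fun s => s.elim (fun w => ⟨Fin.cons true w.1, ?_⟩) (fun w => ⟨Fin.cons false w.1, ?_⟩), ?_, ?_⟩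
  · have := w.2
    rw [List.ofFn_succ, h] at this
    exact this
  · have := w.2
    rw [List.ofFn_succ, Bool.eq_false_iff.2 h] at this
    exact this
  · have := w.2
    simpa [List.ofFn_succ] using this
  · have := w.2
    simpa [List.ofFn_succ] using this
  · intro w
    by_cases h : w.1 0 = true
    · apply Subtype.ext
      simp only [h, dif_pos, Sum.elim_inl]
      rw [← h]; exact Fin.cons_self_tail _
    · apply Subtype.ext
      beta_reduce
      rw [dif_neg h]
      have h' := Bool.eq_false_iff.2 h
      change Fin.cons false (Fin.tail w.1) = w.1
      rw [← h']; exact Fin.cons_self_tail _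
  · rintro (w | w)
    · simp
    · simp

lemma main_count (L : ℕ) : ∀ u d k : ℕ, u + d = L → u ≤ d + k →
    cnt L (fun l => l.count true = u ∧ okw true k l) =
      (if k ≤ u then Nat.fib (2 * (u - k) + 1) else 0) ∧
    (1 ≤ k → cnt L (fun l => l.count true = u ∧ okw false k l) =
      if u = 0 then 1 else if k ≤ u then Nat.fib (2 * (u - k) + 2) else 0) := by
  induction L with
  | zero =>
    intro u d k h1 h2
    obtain rfl : u = 0 := by omega
    refine ⟨?_, fun hk => ?_⟩
    · by_cases hk : k = 0
      · subst hk
        rw [cnt_zero_true] <;> simp [okw]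
      · rw [cnt_false]
        · simp; omega
        · intro l hl
          rw [List.length_eq_zero_iff] at hl
          subst hl
          simp [okw, hk]
    · rw [cnt_zero_true] <;> simp [okw]
  | succ L ih =>
    intro u d k h1 h2
    have htrue : ∀ dir, cnt L (fun l => (true :: l).count true = u ∧ okw dir k (true :: l)) =
        if u = 0 then 0 else if k - 1 ≤ u - 1 then Nat.fib (2 * ((u - 1) - (k - 1)) + 1) else 0 := by
      intro dir
      by_cases hu : u = 0
      · rw [cnt_false]
        · simp [hu]
        · intro l _; simp [hu]
      · rw [if_neg hu, ← (ih (u - 1) d (k - 1) (by omega) (by omega)).1]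
        apply cnt_congr
        intro l _
        have : (true :: l).count true = l.count true + 1 := by simp
        rw [this, show okw dir k (true :: l) = okw true (k - 1) l by cases dir <;> rfl]
        constructor
        · rintro ⟨a, b⟩; exact ⟨by omega, b⟩
        · rintro ⟨a, b⟩; exact ⟨by omega, b⟩
    have hc : ∀ l : List Bool, (false :: l).count true = l.count true := by intro l; simp
    have hd0 : ∀ P : List Bool → Prop, d = 0 → cnt L (fun l => l.count true = u ∧ P l) = 0 := by
      intro P hd
      apply cnt_false
      rintro l hl ⟨h, -⟩
      have := List.count_le_length (a := true) (l := l)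
      omega
    refine ⟨?_, fun hk => ?_⟩
    · rw [cnt_succ, htrue]
      simp only [hc, okw]
      by_cases hk : k = 0
      · subst hk
        simp only [true_and]
        rw [(ih u (d - 1) 1 (by omega) (by omega)).2 le_rfl]
        rcases u with _ | u
        · simp
        · simp
          rw [show 2 * (u + 1) + 1 = (2 * u + 1) + 2 by ring, Nat.fib_add_two (n := 2 * u + 1)]
      · rw [cnt_false L (fun l => l.count true = u ∧ k = 0 ∧ _) (by tauto)]
        split_ifs <;> first | omega | rfl | skip
        rw [show u - 1 - (k - 1) = u - k by omega, add_zero]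
    · rw [cnt_succ, htrue]
      simp only [hc, okw]
      by_cases hd : d = 0
      · rw [hd0 _ hd]
        split_ifs <;> first | omega | rfl | skip
        have : u = k := by omega
        subst this; simp
      · rw [(ih u (d - 1) (k + 1) (by omega) (by omega)).2 (by omega)]
        split_ifs <;> first | omega | rfl | skip
        · rw [show u - 1 - (k - 1) = u - k by omega, 
            show 2 * (u - (k + 1)) + 2 = 2 * (u - k) by omega, Nat.fib_add_two (n := 2 * (u - k))]
          omega
        · obtain rfl : u = k := by omega
          simp

def lsum : List Bool → ℕ → ℤ
  | [], _ => 0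
  | _ :: _, 0 => 0
  | b :: l, i + 1 => stepVal b + lsum l i

def LSum (dir : Bool) (l : List Bool) (i : ℕ) : Prop :=
  (dir :: l)[i]? = some true ∧ (l ++ [false])[i]? = some false

def Good (dir : Bool) (m : ℤ) (l : List Bool) : Prop :=
  (∀ i, LSum dir l i → m ≤ lsum l i) ∧
  ∀ i j, LSum dir l i → LSum dir l j → i < j → lsum l i ≤ lsum l j

lemma lsum_zero (l : List Bool) : lsum l 0 = 0 := by cases l <;> rfl

lemma LSum_succ (dir b : Bool) (l : List Bool) (i : ℕ) :
    LSum dir (b :: l) (i + 1) ↔ LSum b l i := by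
  simp [LSum]

lemma LSum_zero (dir b : Bool) (l : List Bool) :
    LSum dir (b :: l) 0 ↔ dir = true ∧ b = false := by
  simp [LSum]

lemma LSum_nil (dir : Bool) (i : ℕ) : LSum dir [] i ↔ i = 0 ∧ dir = true := by
  cases i <;> simp [LSum]

lemma Good_cons (dir b : Bool) (m : ℤ) (l : List Bool) (h : ¬ (dir = true ∧ b = false)) :
    Good dir m (b :: l) ↔ Good b (m - stepVal b) l := by
  constructor
  · rintro ⟨h1, h2⟩
    refine ⟨fun i hi => ?_, fun i j hi hj hij => ?_⟩
    · have := h1 (i + 1) ((LSum_succ _ _ _ _).2 hi)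
      simp only [lsum] at this; omega
    · have := h2 (i + 1) (j + 1) ((LSum_succ _ _ _ _).2 hi) ((LSum_succ _ _ _ _).2 hj) (by omega)
      simp only [lsum] at this; omega
  · rintro ⟨h1, h2⟩
    refine ⟨fun i hi => ?_, fun i j hi hj hij => ?_⟩
    · rcases i with _ | i
      · exact absurd ((LSum_zero _ _ _).1 hi) h
      · have := h1 i ((LSum_succ _ _ _ _).1 hi)
        simp only [lsum]; omega
    · rcases i with _ | i
      · exact absurd ((LSum_zero _ _ _).1 hi) h
      · rcases j with _ | j
        · omega
        · have := h2 i j ((LSum_succ _ _ _ _).1 hi) ((LSum_succ _ _ _ _).1 hj) (by omega)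
          simp only [lsum]; omega

lemma Good_peak (m : ℤ) (l : List Bool) :
    Good true m (false :: l) ↔ m ≤ 0 ∧ Good false 1 l := by
  constructor
  · rintro ⟨h1, h2⟩
    have h0 : LSum true (false :: l) 0 := (LSum_zero _ _ _).2 ⟨rfl, rfl⟩
    refine ⟨by simpa [lsum] using h1 0 h0, fun i hi => ?_, fun i j hi hj hij => ?_⟩
    · have := h2 0 (i + 1) h0 ((LSum_succ _ _ _ _).2 hi) (by omega)
      simp [lsum, stepVal] at this; omega
    · have := h2 (i + 1) (j + 1) ((LSum_succ _ _ _ _).2 hi) ((LSum_succ _ _ _ _).2 hj) (by omega)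
      simp only [lsum] at this; omega
  · rintro ⟨h0, h1, h2⟩
    refine ⟨fun i hi => ?_, fun i j hi hj hij => ?_⟩
    · rcases i with _ | i
      · simpa [lsum] using h0
      · have := h1 i ((LSum_succ _ _ _ _).1 hi)
        simp [lsum, stepVal]; omega
    · rcases j with _ | j
      · omega
      · rcases i with _ | i
        · have := h1 j ((LSum_succ _ _ _ _).1 hj)
          simp [lsum, stepVal]; omega
        · have := h2 i j ((LSum_succ _ _ _ _).1 hi) ((LSum_succ _ _ _ _).1 hj) (by omega)
          simp only [lsum]; omega

lemma Good_iff (l : List Bool) : ∀ (dir : Bool) (m : ℤ), (dir = false → 1 ≤ m) →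
    (Good dir m l ↔ okw dir m.toNat l) := by
  induction l with
  | nil =>
    intro dir m _
    simp only [Good, LSum_nil, lsum, okw]
    cases dir <;> simp
  | cons b l ih =>
    intro dir m hm
    cases b
    · cases dir
      · rw [Good_cons _ _ _ _ (by simp), ih _ _ (by have := hm rfl; simp [stepVal]; omega)]
        have := hm rfl
        simp only [okw, stepVal]
        rw [show (m - if false = true then 1 else -1).toNat = m.toNat + 1 by simp; omega]
      · rw [Good_peak, ih _ _ (by simp)]
        simp [okw]
    · rw [Good_cons _ _ _ _ (by simp), ih _ _ (by simp),
        show okw dir m.toNat (true :: l) = okw true (m.toNat - 1) l by cases dir <;> rfl]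
      rw [show (m - stepVal true).toNat = m.toNat - 1 by simp [stepVal]]

lemma psum_eq {L : ℕ} (w : Fin L → Bool) (i : ℕ) : psum w i = lsum (List.ofFn w) i := by
  induction L generalizing i with
  | zero => simp [psum, lsum]
  | succ L ih =>
    rw [List.ofFn_succ]
    cases i with
    | zero => simp [psum, lsum]
    | succ i =>
      simp only [lsum]
      rw [← ih, psum, Fin.sum_univ_succ]
      simp [psum]

lemma lsum_length (l : List Bool) : lsum l l.length = 2 * (l.count true : ℤ) - l.length := by
  induction l with
  | nil => simp [lsum]
  | cons b l ih =>
    simp only [List.length_cons, lsum, ih]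
    cases b <;> simp [stepVal] <;> ring

lemma lsum_ge (l : List Bool) (i : ℕ) : - (l.length : ℤ) ≤ lsum l i := by
  induction l generalizing i with
  | nil => simp [lsum]
  | cons b l ih =>
    cases i with
    | zero => simp [lsum]
    | succ i =>
      have := ih i
      cases b <;> simp [lsum, stepVal] <;> omega

lemma isSummit_iff {L : ℕ} (hL : 1 ≤ L) (w : Fin L → Bool) (i : ℕ) :
    IsSummit w i ↔ LSum true (List.ofFn w) i := by
  unfold IsSummit LSum
  have key : ∀ j, ∀ b, (List.ofFn w)[j]? = some b ↔ ∃ k : Fin L, (k : ℕ) = j ∧ w k = b := by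
    intro j b
    rw [List.getElem?_eq_some_iff]
    constructor
    · rintro ⟨h, h'⟩
      exact ⟨⟨j, by simpa using h⟩, rfl, by simpa using h'⟩
    · rintro ⟨k, rfl, h⟩
      exact ⟨by simp, by simpa using h⟩
  rcases i with _ | i
  · have : (List.ofFn w ++ [false])[0]? = (List.ofFn w)[0]? := by
      rw [List.getElem?_append_left]; simp; omega
    rw [this, key]
    simp; omega
  · rw [List.getElem?_cons_succ, key]
    rcases lt_trichotomy (i + 1) L with h | h | h
    · rw [List.getElem?_append_left (by simpa using h), key]
      constructor
      · rintro (⟨h, _⟩ | ⟨_, _, j, k, h1, h2, h3, h4⟩ | ⟨h, _⟩)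
        · omega
        · exact ⟨⟨j, by omega, h3⟩, k, h2, h4⟩
        · omega
      · rintro ⟨⟨j, h1, h3⟩, k, h2, h4⟩
        exact Or.inr (Or.inl ⟨by omega, h, j, k, by omega, h2, h3, h4⟩)
    · rw [List.getElem?_append_right (by simp [h])]
      simp only [List.length_ofFn, h]
      constructor
      · rintro (⟨h, _⟩ | ⟨_, h, _⟩ | ⟨_, j, h1, h2⟩)
        · omega
        · omega
        · exact ⟨⟨j, by omega, h2⟩, by simp⟩
      · rintro ⟨⟨j, h1, h3⟩, -⟩
        exact Or.inr (Or.inr ⟨trivial, j, by omega, h3⟩)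
    · constructor
      · rintro (⟨h, _⟩ | ⟨_, h, _⟩ | ⟨h, _⟩) <;> omega
      · rintro ⟨⟨j, h1, h3⟩, -⟩
        have := j.2
        omega

/-- For every integer `n ≥ 1`, the number of Dyck bridges of
semi-length `n` whose summits are non-decreasing (reading the summits from
left to right, their heights weakly increase) equals the Fibonacci number
`F_{2n+1}`. -/
theorem stmt_16 (n : ℕ) (hn : 1 ≤ n) :
    Nat.card {w : Fin (2 * n) → Bool // IsBridge w ∧
        ∀ i j : ℕ, IsSummit w i → IsSummit w j → i < j →
          psum w i ≤ psum w j} = Nat.fib (2 * n + 1) := by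
  have h := (main_count (2 * n) n n 0 (by ring) (by omega)).1
  simp only [Nat.zero_le, if_true, Nat.sub_zero] at h
  rw [← h]
  unfold cnt
  refine Nat.card_congr (Equiv.subtypeEquivRight fun w => ?_)
  have e := Good_iff (List.ofFn w) true (-((List.ofFn w).length : ℤ)) (by simp)
  rw [show (-((List.ofFn w).length : ℤ)).toNat = 0 by omega] at e
  beta_reduce
  rw [← e]
  have hs := fun i => isSummit_iff (L := 2 * n) (by omega) w i
  simp only [hs, psum_eq, IsBridge, Good]
  have hl := lsum_length (List.ofFn w)
  have hlen : (List.ofFn w).length = 2 * n := by simp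
  rw [hlen] at hl
  constructor
  · rintro ⟨a, b⟩
    refine ⟨by rw [hl] at a; push_cast at a; omega, fun i _ => lsum_ge _ _, b⟩
  · rintro ⟨a, -, b⟩
    refine ⟨by rw [hl]; push_cast; omega, b⟩
end
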